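/- arXiv:1911.01250 — 2 statements merged into one kernel-verified Lean document; each statement's English description precedes it below -/
import Mathlib

section
/- For every ℓ ∈ {0,1,…,k′−1} and every z ∈ I_ℓ, the derivative at z of the function g(z) = z·R(z) / ((z−1)·√(p₀(z))) is nonzero (where I₀ = (0,∞)∖{1} and I_ℓ = (x_{2ℓ}, x_{2ℓ−1}) for ℓ ≥ 1, and p₀ > 0 on each I_ℓ). -/
open Polynomial Matrix

/-- The matrix `A_m(z)` with rows `(z + α β⁻¹, α + β)` and `(z(α⁻¹+β⁻¹), z + β α⁻¹)`. -/
noncomputable def aztecA (a b : ℝ) (z : ℂ) : Matrix (Fin 2) (Fin 2) ℂ :=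
  !![z + (a : ℂ) * ((b : ℂ))⁻¹, (a : ℂ) + (b : ℂ);
     z * (((a : ℂ))⁻¹ + ((b : ℂ))⁻¹), z + (b : ℂ) * ((a : ℂ))⁻¹]

/-- `T(z) = A_1(z) A_2(z) ⋯ A_k(z)`. -/
noncomputable def aztecT {k : ℕ} (α β : Fin k → ℝ) (z : ℂ) : Matrix (Fin 2) (Fin 2) ℂ :=
  (List.ofFn fun m => aztecA (α m) (β m) z).prod
/-- The function `g(z) = z R(z) / ((z−1) √(p₀(z)))`, which up to sign is `z ρ₁′(z)/ρ₁(z)`. -/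
noncomputable def aztecg (R p₀ : Polynomial ℝ) (z : ℝ) : ℝ :=
  z * R.eval z / ((z - 1) * Real.sqrt (p₀.eval z))

/-- `(X - 1) ^ k` is an eigenvector, with eigenvalue `k`, of `f ↦ (X - 1) * derivative f`. -/
lemma sub_one_mul_derivative_pow (k : ℕ) :
    (X - 1 : ℝ[X]) * derivative ((X - 1) ^ k) = C (k : ℝ) * (X - 1) ^ k := by
  cases k with
  | zero => simp
  | succ n =>
    rw [derivative_pow]
    simp only [derivative_sub, derivative_X, derivative_one, Nat.add_sub_cancel]
    ring

/-- The logarithmic-derivative identity obtained by differentiating `τ² - 4 (X - 1)^{2k} = q² p₀`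
and cancelling `q`. -/
lemma two_mul_trace_mul_quotient {k : ℕ} {τ q p₀ R : ℝ[X]} (hq : q ≠ 0)
    (hfact : τ ^ 2 - 4 * (X - 1) ^ (2 * k) = q ^ 2 * p₀)
    (hR : (X - 1) * derivative τ - C (k : ℝ) * τ = q * R) :
    2 * τ * R = (X - 1) * (2 * derivative q * p₀ + q * derivative p₀)
      - 2 * C (k : ℝ) * q * p₀ := by
  have hW := sub_one_mul_derivative_pow k
  rw [mul_comm 2 k, pow_mul] at hfact
  generalize (X - 1 : ℝ[X]) ^ k = W at hW hfact
  have hd := congrArg derivative hfact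
  have h4 : derivative (4 : ℝ[X]) = 0 := derivative_ofNat 4
  simp only [derivative_sub, derivative_mul, derivative_pow, h4, Nat.cast_ofNat, map_ofNat] at hd
  norm_num at hd
  apply mul_left_cancel₀ hq
  linear_combination (X - 1) * hd - 2 * C (k : ℝ) * hfact - 2 * τ * hR + 8 * W * hW

/-- The quotient `R` is nonzero when `p₀` has odd degree. -/
lemma quotient_ne_zero_of_odd {k : ℕ} {τ q p₀ R : ℝ[X]} (hq : q ≠ 0) (hodd : Odd p₀.natDegree)
    (hfact : τ ^ 2 - 4 * (X - 1) ^ (2 * k) = q ^ 2 * p₀)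
    (hR : (X - 1) * derivative τ - C (k : ℝ) * τ = q * R) : R ≠ 0 := by
  rintro rfl
  have hp₀ : p₀ ≠ 0 := by
    rintro rfl
    simp at hodd
  have key := two_mul_trace_mul_quotient hq hfact hR
  have hne : q ^ 2 * p₀ ≠ 0 := mul_ne_zero (pow_ne_zero 2 hq) hp₀
  have hdeg : (q ^ 2 * p₀).natDegree = 2 * q.natDegree + p₀.natDegree := by
    rw [natDegree_mul (pow_ne_zero 2 hq) hp₀, natDegree_pow]
  have hode : (X - 1) * derivative (q ^ 2 * p₀) = C (2 * k : ℝ) * (q ^ 2 * p₀) := by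
    have hC : (C (2 : ℝ) : ℝ[X]) = 2 := map_ofNat C 2
    rw [C_mul, hC, derivative_mul, derivative_pow, Nat.cast_ofNat, hC, pow_one]
    linear_combination -q * key
  generalize q ^ 2 * p₀ = P at hne hdeg hode
  obtain ⟨m, hm⟩ := hodd
  have hn : P.natDegree = (2 * q.natDegree + 2 * m) + 1 := by omega
  have hc := congrArg (fun f => f.coeff (2 * q.natDegree + 2 * m + 1)) hode
  simp only [sub_mul, one_mul, coeff_sub, coeff_X_mul, coeff_derivative, coeff_C_mul] at hc
  rw [coeff_eq_zero_of_natDegree_lt (p := P) (n := 2 * q.natDegree + 2 * m + 1 + 1)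
    (by omega)] at hc
  have hl : P.coeff (2 * q.natDegree + 2 * m + 1) ≠ 0 := by
    rw [← hn]
    exact leadingCoeff_ne_zero.mpr hne
  have hc' : ((2 * q.natDegree + 2 * m + 1 : ℕ) : ℝ) = ((2 * k : ℕ) : ℝ) := by
    apply mul_left_cancel₀ hl
    push_cast at hc ⊢
    linarith
  have := Nat.cast_injective hc'
  omega

/-- Between two consecutive roots of `p₀` enclosing a gap (`p₀ > 0`), the quotient `R` vanishes:
Rolle's theorem applied to `(τ + q √p₀) / (X - 1)^k`. -/
lemma exists_root_quotient_mem_gap {k : ℕ} {τ q p₀ R : ℝ[X]} (hq : q ≠ 0)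
    (hfact : τ ^ 2 - 4 * (X - 1) ^ (2 * k) = q ^ 2 * p₀)
    (hR : (X - 1) * derivative τ - C (k : ℝ) * τ = q * R) {a b : ℝ} (hab : a < b) (hb : b < 1)
    (ha0 : p₀.eval a = 0) (hb0 : p₀.eval b = 0) (hpos : ∀ z ∈ Set.Ioo a b, 0 < p₀.eval z) :
    ∃ y ∈ Set.Ioo a b, R.eval y = 0 := by
  have hnn : ∀ z ∈ Set.Icc a b, 0 ≤ p₀.eval z := by
    intro z hz
    rcases hz.1.eq_or_lt with h | h
    · rw [← h, ha0]
    rcases hz.2.eq_or_lt with h' | h'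
    · rw [h', hb0]
    · exact (hpos z ⟨h, h'⟩).le
  have hWne : ∀ z ∈ Set.Icc a b, ((X - 1 : ℝ[X]) ^ k).eval z ≠ 0 := by
    intro z hz
    have : z - 1 ≠ 0 := by linarith [hz.2]
    simpa using pow_ne_zero k this
  have hev : ∀ z, τ.eval z ^ 2 - 4 * (((X - 1 : ℝ[X]) ^ k).eval z) ^ 2
      = q.eval z ^ 2 * p₀.eval z := by
    intro z
    have h := congrArg (eval z) hfact
    have h4 : eval z (4 : ℝ[X]) = 4 := eval_ofNat 4 z
    rw [mul_comm 2 k, pow_mul] at h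
    simp only [eval_sub, eval_mul, eval_pow _, h4] at h ⊢
    exact h
  have hnum : ∀ z ∈ Set.Icc a b, τ.eval z + q.eval z * √(p₀.eval z) ≠ 0 := by
    intro z hz h
    have hs := Real.sq_sqrt (hnn z hz)
    have h1 := hev z
    have : (((X - 1 : ℝ[X]) ^ k).eval z) ^ 2 = 0 := by
      linear_combination (-1/4) * h1 + (1/4) * (q.eval z) ^ 2 * hs
        + (1/4) * (τ.eval z - q.eval z * √(p₀.eval z)) * h
    exact hWne z hz (pow_eq_zero_iff two_ne_zero |>.mp this)
  set Φ : ℝ → ℝ := fun z =>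
    (τ.eval z + q.eval z * √(p₀.eval z)) / ((X - 1 : ℝ[X]) ^ k).eval z with hΦ
  have hcont : ContinuousOn Φ (Set.Icc a b) := by
    refine ContinuousOn.div ?_ (Polynomial.continuous _).continuousOn hWne
    exact (τ.continuous.add (q.continuous.mul p₀.continuous.sqrt)).continuousOn
  have hΦne : ∀ z ∈ Set.Icc a b, Φ z ≠ 0 := fun z hz => div_ne_zero (hnum z hz) (hWne z hz)
  have hend : ∀ z ∈ Set.Icc a b, p₀.eval z = 0 → Φ z ^ 2 = 4 := by
    intro z hz h0
    have h1 := hev z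
    have h2 := hWne z hz
    simp only [hΦ, h0, Real.sqrt_zero, mul_zero, add_zero, div_pow] at h1 ⊢
    rw [div_eq_iff (pow_ne_zero 2 h2)]
    linarith
  have haI : a ∈ Set.Icc a b := ⟨le_rfl, hab.le⟩
  have hbI : b ∈ Set.Icc a b := ⟨hab.le, le_rfl⟩
  have hΦab : Φ a = Φ b := by
    have h1 := hend a haI ha0
    have h2 := hend b hbI hb0
    rcases sq_eq_sq_iff_eq_or_eq_neg.mp (h1.trans h2.symm) with h | h
    · exact h
    · exfalso
      have h0 : (0 : ℝ) ∈ Set.uIcc (Φ a) (Φ b) := by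
        rw [h, Set.mem_uIcc]
        rcases le_total 0 (Φ b) with h' | h'
        · left; constructor <;> linarith
        · right; constructor <;> linarith
      rw [← Set.uIcc_of_le hab.le] at hcont
      obtain ⟨z, hz, hz0⟩ := intermediate_value_uIcc hcont h0
      rw [Set.uIcc_of_le hab.le] at hz
      exact hΦne z hz hz0
  obtain ⟨y, hy, hy0⟩ := exists_deriv_eq_zero hab hcont hΦab
  refine ⟨y, hy, ?_⟩
  have hyI : y ∈ Set.Icc a b := Set.Ioo_subset_Icc_self hy
  have hpy := hpos y hy
  have hs : √(p₀.eval y) ^ 2 = p₀.eval y := Real.sq_sqrt hpy.le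
  have hsne : √(p₀.eval y) ≠ 0 := (Real.sqrt_pos.mpr hpy).ne'
  have hder := ((τ.hasDerivAt y).add ((q.hasDerivAt y).mul
    ((p₀.hasDerivAt y).sqrt hpy.ne'))).div (((X - 1 : ℝ[X]) ^ k).hasDerivAt y) (hWne y hyI)
  have hd0 := hder.deriv.symm.trans hy0
  rw [div_eq_zero_iff, or_iff_left (pow_ne_zero 2 (hWne y hyI))] at hd0
  have hW := congrArg (eval y) (sub_one_mul_derivative_pow k)
  have hkey := congrArg (eval y) (two_mul_trace_mul_quotient hq hfact hR)
  have hRy := congrArg (eval y) hR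
  have h2 : eval y (2 : ℝ[X]) = 2 := eval_ofNat 2 y
  have hN := hnum y hyI
  have hWy := hWne y hyI
  simp only [eval_mul, eval_sub, eval_add, eval_X, eval_one, eval_C, h2, Pi.add_apply,
    Pi.mul_apply] at hW hkey hRy hd0
  generalize eval y ((X - 1 : ℝ[X]) ^ k) = w at *
  generalize eval y (derivative ((X - 1 : ℝ[X]) ^ k)) = w' at *
  generalize √(p₀.eval y) = s at *
  have he : 2 * s * ((derivative p₀).eval y / (2 * s)) = (derivative p₀).eval y :=
    mul_div_cancel₀ _ (mul_ne_zero two_ne_zero hsne)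
  generalize (derivative p₀).eval y / (2 * s) = e at *
  have hz : w * (R.eval y * (τ.eval y + q.eval y * s)) = 0 := by
    linear_combination s * (y - 1) * hd0 + s * (τ.eval y + q.eval y * s) * hW - s * w * hRy
      + (w / 2) * hkey - w * ((y - 1) * (derivative q).eval y - k * q.eval y) * hs
      - w * (y - 1) * q.eval y / 2 * he
  simpa [hWy, hN] using hz

/-- A polynomial of degree at most `n` with a root in each of `n` disjoint intervals has only
simple roots, all of them in these intervals. -/
lemma simple_roots_of_root_in_each {n : ℕ} {R : ℝ[X]} (hR : R ≠ 0) (hdeg : R.natDegree ≤ n)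
    {lo hi : Fin n → ℝ} (hsep : ∀ i j, i < j → hi j < lo i)
    (hroot : ∀ i, ∃ y ∈ Set.Ioo (lo i) (hi i), R.eval y = 0) {r : ℝ} (hr : R.eval r = 0) :
    (∃ i, r ∈ Set.Ioo (lo i) (hi i)) ∧ (derivative R).eval r ≠ 0 := by
  choose y hy hy0 using hroot
  have hinj : Function.Injective y := by
    intro i j hij
    rcases lt_trichotomy i j with h | h | h
    · linarith [hsep i j h, (hy i).1, (hy j).2]
    · exact h
    · linarith [hsep j i h, (hy j).1, (hy i).2]
  have hsub : Finset.univ.image y ⊆ R.roots.toFinset := by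
    intro t ht
    obtain ⟨i, -, rfl⟩ := Finset.mem_image.mp ht
    simpa [hR] using hy0 i
  have hcard : (Finset.univ.image y).card = n := by
    rw [Finset.card_image_of_injective _ hinj, Finset.card_univ, Fintype.card_fin]
  have h1 : R.roots.toFinset.card ≤ R.roots.card := Multiset.toFinset_card_le _
  have h2 : R.roots.card ≤ n := (card_roots' R).trans hdeg
  have h3 := Finset.card_le_card hsub
  have heq : Finset.univ.image y = R.roots.toFinset :=
    Finset.eq_of_subset_of_card_le hsub (by omega)
  have hnodup : R.roots.Nodup := Multiset.toFinset_card_eq_card_iff_nodup.mp (by omega)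
  constructor
  · have : r ∈ Finset.univ.image y := by
      rw [heq]
      simpa [hR] using hr
    obtain ⟨i, -, rfl⟩ := Finset.mem_image.mp this
    exact ⟨i, hy i⟩
  · intro hd
    have := (one_lt_rootMultiplicity_iff_isRoot hR).mpr ⟨hr, hd⟩
    have h4 := Multiset.nodup_iff_count_le_one.mp hnodup r
    rw [count_roots] at h4
    omega

/-- A polynomial takes the value zero strictly between two points where it has opposite signs. -/
lemma exists_root_Ioo {M : ℝ[X]} {a b : ℝ} (hab : a < b) (h : M.eval a * M.eval b < 0) :
    ∃ r ∈ Set.Ioo a b, M.eval r = 0 := by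
  rcases mul_neg_iff.mp h with ⟨h1, h2⟩ | ⟨h1, h2⟩
  · exact intermediate_value_Ioo' hab.le M.continuous.continuousOn ⟨h2, h1⟩
  · exact intermediate_value_Ioo hab.le M.continuous.continuousOn ⟨h1, h2⟩

/-- The level-set polynomial `X R² - c² (X - 1)² P` has only simple roots. -/
lemma level_polynomial_simple_roots {n : ℕ} {R P : ℝ[X]} (hR : R ≠ 0) (hRdeg : R.natDegree ≤ n)
    (hPdeg : P.natDegree = 2 * n) (hPlead : 0 < P.leadingCoeff)
    {lo hi : Fin n → ℝ} (hsep : ∀ i j, i < j → hi j < lo i) (hneg : ∀ i, hi i < 0)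
    (hlo : ∀ i, P.eval (lo i) = 0) (hhi : ∀ i, P.eval (hi i) = 0)
    (hgap : ∀ i, ∀ z ∈ Set.Ioo (lo i) (hi i), P.eval z < 0) (hP0 : 0 < P.eval 0)
    (hroot : ∀ i, ∃ y ∈ Set.Ioo (lo i) (hi i), R.eval y = 0)
    {c : ℝ} (hc : c ≠ 0) {r : ℝ} (hr : (X * R ^ 2 - C (c ^ 2) * (X - 1) ^ 2 * P).eval r = 0) :
    (derivative (X * R ^ 2 - C (c ^ 2) * (X - 1) ^ 2 * P)).eval r ≠ 0 := by
  have hc2 : 0 < c ^ 2 := by positivity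
  have hev : ∀ z, (X * R ^ 2 - C (c ^ 2) * (X - 1) ^ 2 * P).eval z
      = z * R.eval z ^ 2 - c ^ 2 * (z - 1) ^ 2 * P.eval z := by
    intro z
    simp only [eval_sub, eval_mul, eval_pow, eval_X, eval_C, eval_one]
  have hP : P ≠ 0 := leadingCoeff_ne_zero.mp hPlead.ne'
  have hX1 : (X - 1 : ℝ[X]).Monic := by simpa using monic_X_sub_C (1 : ℝ)
  have hX1deg : (X - 1 : ℝ[X]).natDegree = 1 := by simpa using natDegree_X_sub_C (1 : ℝ)
  have hCdeg : (C (c ^ 2) * (X - 1) ^ 2 * P).natDegree = 2 * n + 2 := by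
    rw [natDegree_mul (mul_ne_zero (C_ne_zero.mpr hc2.ne') (hX1.pow 2).ne_zero) hP,
      natDegree_C_mul hc2.ne', hX1.natDegree_pow, hX1deg, hPdeg]
    omega
  have hXdeg : (X * R ^ 2).natDegree ≤ 2 * n + 1 := by
    refine natDegree_mul_le.trans ?_
    have : (R ^ 2).natDegree ≤ 2 * R.natDegree := natDegree_pow_le
    rw [natDegree_X]
    omega
  have hltdeg : (X * R ^ 2).degree < (C (c ^ 2) * (X - 1) ^ 2 * P).degree :=
    degree_lt_degree (by omega)
  have hlead : (X * R ^ 2 - C (c ^ 2) * (X - 1) ^ 2 * P).leadingCoeff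
      = -(c ^ 2 * P.leadingCoeff) := by
    rw [leadingCoeff_sub_of_degree_lt' hltdeg, leadingCoeff_mul, leadingCoeff_mul, leadingCoeff_C,
      (hX1.pow 2).leadingCoeff, mul_one]
  have hdeg : (X * R ^ 2 - C (c ^ 2) * (X - 1) ^ 2 * P).natDegree = 2 * n + 2 := by
    rw [natDegree_sub_eq_right_of_natDegree_lt (by omega), hCdeg]
  have hsimple := fun t => simple_roots_of_root_in_each hR hRdeg hsep hroot (r := t)
  generalize X * R ^ 2 - C (c ^ 2) * (X - 1) ^ 2 * P = M at *
  have hleadneg : M.leadingCoeff < 0 := by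
    rw [hlead]
    have := mul_pos hc2 hPlead
    linarith
  have hM : M ≠ 0 := leadingCoeff_ne_zero.mp hleadneg.ne
  have hlt : ∀ i, lo i < hi i := by
    intro i
    obtain ⟨y, hy, -⟩ := hroot i
    exact hy.1.trans hy.2
  -- `M` is negative at the gap endpoints, since `R` does not vanish there
  have hMneg : ∀ t < 0, P.eval t = 0 → M.eval t < 0 := by
    intro t ht hPt
    rw [hev, hPt]
    have hRt : R.eval t ≠ 0 := by
      intro h
      obtain ⟨i, hi'⟩ := (hsimple t h).1
      linarith [hgap i t hi']
    have : 0 < R.eval t ^ 2 := by positivity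
    nlinarith
  choose y hy hy0 using hroot
  have hMy : ∀ i, 0 < M.eval (y i) := by
    intro i
    rw [hev, hy0]
    have h1 := hgap i _ (hy i)
    have h2 : y i - 1 ≠ 0 := by linarith [(hy i).2, hneg i]
    have h3 : 0 < c ^ 2 * (y i - 1) ^ 2 := by positivity
    nlinarith
  have hleft : ∀ i, ∃ t ∈ Set.Ioo (lo i) (y i), M.eval t = 0 := fun i =>
    exists_root_Ioo (hy i).1
      (mul_neg_of_neg_of_pos (hMneg _ ((hlt i).trans (hneg i)) (hlo i)) (hMy i))
  have hright : ∀ i, ∃ t ∈ Set.Ioo (y i) (hi i), M.eval t = 0 := fun i =>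
    exists_root_Ioo (hy i).2 (mul_neg_of_pos_of_neg (hMy i) (hMneg _ (hneg i) (hhi i)))
  choose u hu hu0 using hleft
  choose v hv hv0 using hright
  have hM0 : M.eval 0 < 0 := by
    rw [hev]
    have := mul_pos hc2 hP0
    linarith
  have hM1 : 0 < M.eval 1 := by
    rw [hev]
    have hR1 : R.eval 1 ≠ 0 := by
      intro h
      obtain ⟨i, hi'⟩ := (hsimple 1 h).1
      linarith [hi'.2, hneg i]
    have : 0 < R.eval 1 ^ 2 := by positivity
    linarith
  obtain ⟨a, ha, ha0⟩ := exists_root_Ioo zero_lt_one (mul_neg_of_neg_of_pos hM0 hM1)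
  obtain ⟨B, hB1, hB⟩ : ∃ B, 1 < B ∧ M.eval B < 0 := by
    have ht := M.tendsto_atBot_of_leadingCoeff_nonpos
      (natDegree_pos_iff_degree_pos.mp (by omega)) hleadneg.le
    obtain ⟨B, h1, h2⟩ :=
      ((Filter.eventually_gt_atTop 1).and (ht.eventually_lt_atBot 0)).exists
    exact ⟨B, h1, h2⟩
  obtain ⟨b, hb, hb0⟩ := exists_root_Ioo hB1 (mul_neg_of_pos_of_neg hM1 hB)
  have hFI : ∀ s : Fin n × Bool, (if s.2 then u s.1 else v s.1) ∈ Set.Ioo (lo s.1) (hi s.1) := by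
    rintro ⟨i, _ | _⟩
    · simpa using ⟨(hy i).1.trans (hv i).1, (hv i).2⟩
    · simpa using ⟨(hu i).1, (hu i).2.trans (hy i).2⟩
  have hinj : Function.Injective fun s : Fin n × Bool => if s.2 then u s.1 else v s.1 := by
    intro s t hst
    have hst' : (if s.2 then u s.1 else v s.1) = (if t.2 then u t.1 else v t.1) := hst
    have hs := hFI s
    have ht := hFI t
    rcases lt_trichotomy s.1 t.1 with h | h | h
    · linarith [hsep _ _ h, hs.1, ht.2]
    · obtain ⟨i, β₁⟩ := s
      obtain ⟨j, β₂⟩ := t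
      obtain rfl : i = j := h
      have h1 := (hu i).2
      have h2 := (hv i).1
      rcases β₁ with _ | _ <;> rcases β₂ with _ | _ <;> first | rfl | (simp at hst'; linarith)
    · linarith [hsep _ _ h, ht.1, hs.2]
  have hnot : ∀ t, 0 < t →
      t ∉ Finset.univ.image fun s : Fin n × Bool => if s.2 then u s.1 else v s.1 := by
    intro t ht hmem
    obtain ⟨s, -, rfl⟩ := Finset.mem_image.mp hmem
    linarith [(hFI s).2, hneg s.1]
  set S := Finset.univ.image fun s : Fin n × Bool => if s.2 then u s.1 else v s.1 with hS
  have hScard : S.card = 2 * n := by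
    rw [hS, Finset.card_image_of_injective _ hinj, Finset.card_univ, Fintype.card_prod,
      Fintype.card_fin, Fintype.card_bool, mul_comm]
  have hbS : b ∉ S := hnot b (by linarith [hb.1])
  have haS : a ∉ insert b S := by
    rw [Finset.mem_insert, not_or]
    exact ⟨by linarith [ha.2, hb.1], hnot a ha.1⟩
  have hcard : (insert a (insert b S)).card = 2 * n + 2 := by
    rw [Finset.card_insert_of_notMem haS, Finset.card_insert_of_notMem hbS, hScard]
  have hsub : insert a (insert b S) ⊆ M.roots.toFinset := by
    intro t ht
    rw [Multiset.mem_toFinset, mem_roots hM, IsRoot.def]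
    rcases Finset.mem_insert.mp ht with rfl | ht
    · exact ha0
    rcases Finset.mem_insert.mp ht with rfl | ht
    · exact hb0
    obtain ⟨⟨i, _ | _⟩, -, rfl⟩ := Finset.mem_image.mp ht
    · simpa using hv0 i
    · simpa using hu0 i
  have h1 : M.roots.toFinset.card ≤ M.roots.card := Multiset.toFinset_card_le _
  have h2 : M.roots.card ≤ 2 * n + 2 := (card_roots' M).trans hdeg.le
  have h3 := Finset.card_le_card hsub
  have hnodup : M.roots.Nodup := Multiset.toFinset_card_eq_card_iff_nodup.mp (by omega)
  intro hd
  have := (one_lt_rootMultiplicity_iff_isRoot hM).mpr ⟨hr, hd⟩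
  have h4 := Multiset.nodup_iff_count_le_one.mp hnodup r
  rw [count_roots] at h4
  omega

/-- At a critical point `z` of `aztecg` with value `c`, the level-set polynomial has a double root;
if moreover `c = 0`, then `R` has a double root. -/
lemma double_root_of_deriv_aztecg_eq_zero {R P : ℝ[X]} {z : ℝ} (hpos : 0 < (X * P).eval z)
    (hz1 : z ≠ 1) (hd : deriv (aztecg R (X * P)) z = 0) :
    (aztecg R (X * P) z = 0 → R.eval z = 0 ∧ (derivative R).eval z = 0) ∧
    (X * R ^ 2 - C (aztecg R (X * P) z ^ 2) * (X - 1) ^ 2 * P).eval z = 0 ∧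
    (derivative (X * R ^ 2 - C (aztecg R (X * P) z ^ 2) * (X - 1) ^ 2 * P)).eval z = 0 := by
  have hz0 : z ≠ 0 := by
    rintro rfl
    simp at hpos
  have hz1' : z - 1 ≠ 0 := sub_ne_zero.mpr hz1
  have hs : √((X * P).eval z) ^ 2 = (X * P).eval z := Real.sq_sqrt hpos.le
  have hsne : √((X * P).eval z) ≠ 0 := (Real.sqrt_pos.mpr hpos).ne'
  have hgz : aztecg R (X * P) z * ((z - 1) * √((X * P).eval z)) = z * R.eval z :=
    div_mul_cancel₀ _ (mul_ne_zero hz1' hsne)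
  have hder := ((hasDerivAt_id z).mul (R.hasDerivAt z)).div
    (((hasDerivAt_id z).sub_const 1).mul (((X * P).hasDerivAt z).sqrt hpos.ne'))
    (mul_ne_zero hz1' hsne)
  have hd' := hder.deriv.symm.trans hd
  simp only [Pi.mul_apply, id] at hd'
  rw [div_eq_zero_iff, or_iff_left (pow_ne_zero 2 (mul_ne_zero hz1' hsne))] at hd'
  generalize aztecg R (X * P) z = c at *
  simp only [eval_mul, eval_X, derivative_mul, derivative_X, eval_add, one_mul, id,
    Pi.mul_apply] at *
  generalize √(z * P.eval z) = s at *
  have he : 2 * s * ((P.eval z + z * (derivative P).eval z) / (2 * s))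
      = P.eval z + z * (derivative P).eval z :=
    mul_div_cancel₀ _ (mul_ne_zero two_ne_zero hsne)
  generalize (P.eval z + z * (derivative P).eval z) / (2 * s) = e at *
  have hcrit : R.eval z + z * (derivative R).eval z = c * (s + (z - 1) * e) := by
    apply mul_left_cancel₀ (mul_ne_zero hz1' hsne)
    linear_combination hd' - (s + (z - 1) * e) * hgz
  have hM : z * R.eval z ^ 2 - c ^ 2 * (z - 1) ^ 2 * P.eval z = 0 := by
    apply mul_left_cancel₀ hz0
    linear_combination -(z * R.eval z + c * ((z - 1) * s)) * hgz + c ^ 2 * (z - 1) ^ 2 * hs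
  refine ⟨?_, ?_, ?_⟩
  · rintro rfl
    have hRz : R.eval z = 0 := by simpa [hz0] using hgz.symm
    refine ⟨hRz, ?_⟩
    simpa [hRz, hz0] using hcrit
  · simpa using hM
  · simp only [derivative_sub, derivative_mul, derivative_pow, derivative_X, derivative_C,
      derivative_one, eval_sub, eval_add, eval_mul, eval_pow, eval_X, eval_C, eval_one, eval_zero]
    norm_num
    apply mul_left_cancel₀ hz0
    linear_combination 2 * z * R.eval z * hcrit - 2 * c * (s + (z - 1) * e) * hgz
      + 2 * c ^ 2 * (z - 1) * hs + c ^ 2 * (z - 1) ^ 2 * he - hM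

/-- The product `∏ (z - x i)` over a strictly decreasing sequence is positive when exactly an even
number of its terms lie above `z`. -/
lemma prod_sub_pos_of_even {n m : ℕ} (hm : m ≤ n) (heven : Even m) {x : Fin n → ℝ} {z : ℝ}
    (habove : ∀ i : Fin n, (i : ℕ) < m → z < x i) (hbelow : ∀ i : Fin n, m ≤ (i : ℕ) → x i < z) :
    0 < ∏ i, (z - x i) := by
  have h : ∏ i, (z - x i) = ∏ i : Fin n, (if (i : ℕ) < m then (-1 : ℝ) else 1) * |z - x i| := by
    refine Finset.prod_congr rfl fun i _ => ?_
    split_ifs with hi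
    · rw [abs_of_neg (by linarith [habove i hi])]
      ring
    · rw [abs_of_pos (by linarith [hbelow i (not_lt.mp hi)]), one_mul]
  have hcard : (Finset.univ.filter fun i : Fin n => (i : ℕ) < m).card = m := by
    rw [Fin.card_filter_val_lt, min_eq_right hm]
  rw [h, Finset.prod_mul_distrib, Finset.prod_ite, Finset.prod_const, Finset.prod_const, hcard,
    heven.neg_one_pow, one_pow, one_mul, one_mul]
  refine Finset.prod_pos fun i _ => abs_pos.mpr ?_
  rcases lt_or_ge (i : ℕ) m with hi | hi
  · linarith [habove i hi]
  · linarith [hbelow i hi]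

/-- A polynomial with as many distinct roots as its degree is the product of its linear factors. -/
lemma eq_C_leadingCoeff_mul_prod {n : ℕ} {P : ℝ[X]} (hdeg : P.natDegree = n) (hP : P ≠ 0)
    {x : Fin n → ℝ} (hinj : Function.Injective x) (hroot : ∀ i, P.eval (x i) = 0) :
    P = C P.leadingCoeff * ∏ i, (X - C (x i)) := by
  have hle : (Finset.univ.image x).val ≤ P.roots := by
    rw [Multiset.le_iff_subset (Finset.nodup _)]
    intro t ht
    obtain ⟨i, -, rfl⟩ := Finset.mem_image.mp (Finset.mem_val.mp ht)
    exact (mem_roots hP).mpr (hroot i)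
  have hcard : (Finset.univ.image x).card = n := by
    rw [Finset.card_image_of_injective _ hinj, Finset.card_univ, Fintype.card_fin]
  have heq : (Finset.univ.image x).val = P.roots :=
    Multiset.eq_of_le_of_card_le hle ((card_roots' P).trans (by rw [hdeg]; exact hcard.ge))
  have hfull : P.roots.card = P.natDegree := by
    rw [← heq, hdeg]
    exact hcard
  conv_lhs => rw [← C_leadingCoeff_mul_prod_multiset_X_sub_C hfull, ← heq]
  rw [← Finset.prod_image (s := Finset.univ) (g := x) (f := fun t => X - C t) hinj.injOn]
  rfl

/-- the derivative of `g` is nonzero on `I₀ = (0,∞)∖{1}` and on each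
`I_ℓ = (x_{2ℓ}, x_{2ℓ−1})` for `ℓ = 1,…,k′−1`. -/
theorem stmt17 (k : ℕ) (hk : 1 ≤ k) (α β : Fin k → ℝ)
    (hα : ∀ m, 0 < α m) (hβ : ∀ m, 0 < β m)
    (hprod : ∏ m, α m = ∏ m, β m)
    (trT p : Polynomial ℝ)
    (htr : ∀ z : ℂ, Polynomial.aeval z trT = Matrix.trace (aztecT α β z))
    (hp : ∀ z : ℂ, Polynomial.aeval z p
        = (Matrix.trace (aztecT α β z)) ^ 2 - 4 * (z - 1) ^ (2 * k))
    (k' : ℕ) (hk'1 : 1 ≤ k') (hk'k : k' ≤ k)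
    (q p₀ : Polynomial ℝ) (hq : q.Monic) (hp₀sf : Squarefree p₀)
    (hp₀lead : 0 < p₀.leadingCoeff) (hfact : p = q ^ 2 * p₀)
    (hp₀deg : p₀.natDegree = 2 * k' - 1)
    (x : Fin (2 * k' - 1) → ℝ) (hx0 : x ⟨0, by omega⟩ = 0) (hxanti : StrictAnti x)
    (hxroot : ∀ i, p₀.eval (x i) = 0)
    (R : Polynomial ℝ)
    (hR : (X - 1) * Polynomial.derivative trT - Polynomial.C (k : ℝ) * trT = q * R)
    (hRdeg : R.natDegree = k' - 1) :
    (∀ z ∈ Set.Ioi (0 : ℝ) \ {1}, deriv (aztecg R p₀) z ≠ 0) ∧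
    (∀ ℓ : ℕ, ∀ _h1 : 1 ≤ ℓ, ∀ _h2 : ℓ ≤ k' - 1,
      ∀ z ∈ Set.Ioo (x ⟨2 * ℓ, by omega⟩) (x ⟨2 * ℓ - 1, by omega⟩),
        deriv (aztecg R p₀) z ≠ 0) := by
  have hq0 : q ≠ 0 := hq.ne_zero
  have hp₀ : p₀ ≠ 0 := leadingCoeff_ne_zero.mp hp₀lead.ne'
  have hdisc : trT ^ 2 - 4 * (X - 1) ^ (2 * k) = q ^ 2 * p₀ := by
    rw [← hfact]
    apply Polynomial.map_injective (algebraMap ℝ ℂ) (algebraMap ℝ ℂ).injective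
    apply Polynomial.funext
    intro z
    have h4 : aeval z (4 : ℝ[X]) = 4 := map_ofNat (aeval z) 4
    rw [eval_map_algebraMap, eval_map_algebraMap, hp z, ← htr z]
    simp [h4]
  have hprod₀ := eq_C_leadingCoeff_mul_prod hp₀deg hp₀ hxanti.injective hxroot
  have heval : ∀ z, p₀.eval z = p₀.leadingCoeff * ∏ i, (z - x i) := by
    intro z
    conv_lhs => rw [hprod₀]
    simp [eval_prod]
  have hxneg : ∀ i : Fin (2 * k' - 1), 1 ≤ (i : ℕ) → x i < 0 := by
    intro i hi
    rw [← hx0]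
    exact hxanti (Fin.lt_def.mpr hi)
  have hpos₀ : ∀ z, 0 < z → 0 < p₀.eval z := by
    intro z hz
    rw [heval]
    refine mul_pos hp₀lead (prod_sub_pos_of_even (m := 0) (by omega) (by simp) (by simp) ?_)
    intro i _
    rcases Nat.eq_zero_or_pos (i : ℕ) with h | h
    · have hi : i = ⟨0, by omega⟩ := Fin.ext h
      rwa [hi, hx0]
    · exact (hxneg i h).trans hz
  have hposgap : ∀ (ℓ : ℕ) (_ : 1 ≤ ℓ) (_ : ℓ ≤ k' - 1),
      ∀ z ∈ Set.Ioo (x ⟨2 * ℓ, by omega⟩) (x ⟨2 * ℓ - 1, by omega⟩), 0 < p₀.eval z := by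
    intro ℓ h1 h2 z hz
    rw [heval]
    refine mul_pos hp₀lead (prod_sub_pos_of_even (m := 2 * ℓ) (by omega) (by simp) ?_ ?_)
    · intro i hi
      exact hz.2.trans_le (hxanti.antitone (Fin.le_def.mpr (by simp; omega)))
    · intro i hi
      exact (hxanti.antitone (Fin.le_def.mpr (by simpa using hi))).trans_lt hz.1
  obtain ⟨P, rfl⟩ : X ∣ p₀ := by
    have h := hxroot ⟨0, by omega⟩
    rwa [hx0, ← coeff_zero_eq_eval_zero, ← X_dvd_iff] at h
  have hPne : P ≠ 0 := right_ne_zero_of_mul hp₀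
  have hPdeg : P.natDegree = 2 * (k' - 1) := by
    rw [natDegree_X_mul hPne] at hp₀deg
    omega
  have hPlead : 0 < P.leadingCoeff := by simpa using hp₀lead
  have hP0 : 0 < P.eval 0 := by
    have hge : 0 ≤ P.eval 0 := by
      have hcl : (0 : ℝ) ∈ closure (Set.Ioi 0) := by simp
      refine closure_minimal (t := {t | 0 ≤ P.eval t}) ?_
        (isClosed_le continuous_const P.continuous) hcl
      intro t ht
      have := hpos₀ t ht
      rw [eval_mul, eval_X] at this
      exact (pos_of_mul_pos_right this (le_of_lt ht)).le
    refine lt_of_le_of_ne hge fun h => ?_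
    have hXP : X ∣ P := by
      rw [X_dvd_iff, coeff_zero_eq_eval_zero, ← h]
    exact not_isUnit_X (hp₀sf X (mul_dvd_mul_left X hXP))
  let lo : Fin (k' - 1) → ℝ := fun i => x ⟨2 * (i + 1), by omega⟩
  let hi : Fin (k' - 1) → ℝ := fun i => x ⟨2 * (i + 1) - 1, by omega⟩
  have hsep : ∀ i j, i < j → hi j < lo i := fun i j hij =>
    hxanti (Fin.lt_def.mpr (by have := Fin.lt_def.mp hij; simp; omega))
  have hlohi : ∀ i, lo i < hi i := fun i => hxanti (Fin.lt_def.mpr (by simp))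
  have hneg : ∀ i, hi i < 0 := fun i => hxneg _ (by simp; omega)
  have hPzero : ∀ t < 0, (X * P).eval t = 0 → P.eval t = 0 := by
    intro t ht h
    rw [eval_mul, eval_X] at h
    exact (mul_eq_zero.mp h).resolve_left ht.ne
  have hgap : ∀ i, ∀ z ∈ Set.Ioo (lo i) (hi i), 0 < (X * P).eval z := fun i =>
    hposgap (i + 1) (by omega) (by omega)
  have hroot : ∀ i, ∃ y ∈ Set.Ioo (lo i) (hi i), R.eval y = 0 := fun i =>
    exists_root_quotient_mem_gap hq0 hdisc hR (hlohi i) ((hneg i).trans zero_lt_one)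
      (hxroot _) (hxroot _) (hgap i)
  have hRne : R ≠ 0 :=
    quotient_ne_zero_of_odd hq0 (by rw [hp₀deg]; exact ⟨k' - 1, by omega⟩) hdisc hR
  have hmain : ∀ z, 0 < (X * P).eval z → z ≠ 1 → deriv (aztecg R (X * P)) z ≠ 0 := by
    intro z hz hz1 hd
    obtain ⟨h0, hM, hM'⟩ := double_root_of_deriv_aztecg_eq_zero hz hz1 hd
    by_cases hc : aztecg R (X * P) z = 0
    · exact (simple_roots_of_root_in_each hRne hRdeg.le hsep hroot (h0 hc).1).2 (h0 hc).2
    · refine level_polynomial_simple_roots hRne hRdeg.le hPdeg hPlead hsep hneg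
        (fun i => hPzero _ ((hlohi i).trans (hneg i)) (hxroot _))
        (fun i => hPzero _ (hneg i) (hxroot _)) ?_ hP0 hroot hc hM hM'
      intro i t ht
      have h := hgap i t ht
      rw [eval_mul, eval_X] at h
      exact (neg_iff_neg_of_mul_pos h).mp (ht.2.trans (hneg i))
  refine ⟨fun z hz => hmain z (hpos₀ z hz.1) hz.2, fun ℓ h1 h2 z hz => ?_⟩
  refine hmain z (hposgap ℓ h1 h2 z hz) ?_
  have := hz.2.trans (hxneg _ (by simp; omega))
  linarith
end

section
/- For every x ∈ S = (0,1) ∪ (1,∞): the derivative at x of the function y ↦ (y−1)·ρ′(y)/ρ(y) is nonzero, and the derivative at x of the function y ↦ y(y−1)·ρ′(y)/ρ(y) is nonzero. -/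
open Polynomial Matrix

/-- The indefinite Hermitian form `Re (v₀ · conj (v₁ / ζ))`. -/
noncomputable def indefForm (ζ : ℂ) (v : Fin 2 → ℂ) : ℝ :=
  (v 0 * (starRingEnd ℂ) (v 1 / ζ)).re

lemma elementary_step_le {ζ : ℂ} (hζ : 0 < ζ.re) {a : ℝ} (ha : 0 < a) (w₁ w₂ : ℂ) :
    ‖ζ ^ 2 - 1‖ * (w₁ * (starRingEnd ℂ) w₂).re ≤
      ((ζ * w₁ + a * w₂) * (starRingEnd ℂ) ((a : ℂ)⁻¹ * w₁ + ζ * w₂)).re ∧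
    (ζ ≠ 1 → (w₁ ≠ 0 ∨ w₂ ≠ 0) → ‖ζ ^ 2 - 1‖ * (w₁ * (starRingEnd ℂ) w₂).re <
      ((ζ * w₁ + a * w₂) * (starRingEnd ℂ) ((a : ℂ)⁻¹ * w₁ + ζ * w₂)).re) := by
  set N := ‖ζ ^ 2 - 1‖ with hN
  have hN0 : 0 ≤ N := norm_nonneg _
  set M := ζ.re ^ 2 + ζ.im ^ 2 + 1 with hM
  set R := ζ.re with hR
  have hNsq : N ^ 2 = M ^ 2 - 4 * R ^ 2 := by
    rw [hN, ← Complex.normSq_eq_norm_sq, Complex.normSq_apply]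
    simp [pow_two]
    ring
  have hMR : M - 2 * R = (R - 1) ^ 2 + ζ.im ^ 2 := by rw [hM]; ring
  have hMR0 : 0 ≤ M - 2 * R := by rw [hMR]; positivity
  have hNM : N ≤ M := by
    apply le_of_sq_le_sq _ (by linarith)
    nlinarith
  have hle : M - 2 * R ≤ N := by
    apply le_of_sq_le_sq _ hN0
    nlinarith
  set P := (w₁.re ^ 2 + w₁.im ^ 2) / a + a * (w₂.re ^ 2 + w₂.im ^ 2) with hP
  set q := (w₁ * (starRingEnd ℂ) w₂).re with hq
  have hqP : P + 2 * q = ((w₁.re + a * w₂.re) ^ 2 + (w₁.im + a * w₂.im) ^ 2) / a := by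
    rw [hP, hq]
    simp
    field_simp
    ring
  have hqP0 : 0 ≤ P + 2 * q := by rw [hqP]; positivity
  have hexp : ((ζ * w₁ + a * w₂) * (starRingEnd ℂ) ((a : ℂ)⁻¹ * w₁ + ζ * w₂)).re
      = R * P + M * q := by
    rw [hP, hq, hM, hR, ← Complex.ofReal_inv]
    simp
    field_simp
    ring
  have hP0 : 0 ≤ P := by positivity
  rw [hexp]
  constructor
  · nlinarith [mul_nonneg (sub_nonneg.2 hNM) hqP0, mul_nonneg (sub_nonneg.2 hle) hP0]
  · intro h1 hw
    have hlt0 : 0 < M - 2 * R := by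
      rcases hMR0.lt_or_eq with h | h
      · exact h
      · exfalso
        apply h1
        rw [hMR] at h
        apply Complex.ext
        · have h2 : (R - 1) ^ 2 = 0 := by linarith [sq_nonneg (R - 1), sq_nonneg ζ.im]
          exact sub_eq_zero.1 (pow_eq_zero_iff two_ne_zero |>.1 h2)
        · exact pow_eq_zero_iff two_ne_zero |>.1
            (by linarith [sq_nonneg (R - 1), sq_nonneg ζ.im])
    have hlt : M - 2 * R < N := by
      apply lt_of_pow_lt_pow_left₀ 2 hN0
      nlinarith
    have hPpos : 0 < P := by
      rw [hP]
      rcases hw with h | h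
      · have : 0 < w₁.re ^ 2 + w₁.im ^ 2 := by
          have := Complex.normSq_pos.2 h
          rw [Complex.normSq_apply] at this
          nlinarith
        positivity
      · have : 0 < w₂.re ^ 2 + w₂.im ^ 2 := by
          have := Complex.normSq_pos.2 h
          rw [Complex.normSq_apply] at this
          nlinarith
        positivity
    nlinarith [mul_nonneg (sub_nonneg.2 hNM) hqP0, mul_pos (sub_pos.2 hlt) hPpos]

lemma norm_sq_sub_one_pos {ζ : ℂ} (hζ : 0 < ζ.re) (hζ1 : ζ ≠ 1) : 0 < ‖ζ ^ 2 - 1‖ := by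
  rw [norm_pos_iff, sub_ne_zero]
  intro h
  rcases sq_eq_sq_iff_eq_or_eq_neg.mp (h.trans (one_pow 2).symm) with h | h
  · exact hζ1 h
  · rw [h] at hζ; norm_num at hζ

lemma indefForm_aztecA {ζ : ℂ} (hζ : 0 < ζ.re) (hζ1 : ζ ≠ 1) {a b : ℝ} (ha : 0 < a) (hb : 0 < b)
    (v : Fin 2 → ℂ) :
    ‖ζ ^ 2 - 1‖ ^ 2 * indefForm ζ v ≤ indefForm ζ (aztecA a b (ζ ^ 2) *ᵥ v) ∧
    (v ≠ 0 → ‖ζ ^ 2 - 1‖ ^ 2 * indefForm ζ v < indefForm ζ (aztecA a b (ζ ^ 2) *ᵥ v)) := by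
  have hζ0 : ζ ≠ 0 := by rintro rfl; simp at hζ
  have ha' : (a : ℂ) ≠ 0 := by exact_mod_cast ha.ne'
  have hb' : (b : ℂ) ≠ 0 := by exact_mod_cast hb.ne'
  have hN := norm_sq_sub_one_pos hζ hζ1
  have h1 := elementary_step_le hζ hb (v 0) (v 1 / ζ)
  have h2 := (elementary_step_le hζ ha (ζ * v 0 + b * (v 1 / ζ))
    ((b : ℂ)⁻¹ * v 0 + ζ * (v 1 / ζ))).1
  have e : indefForm ζ (aztecA a b (ζ ^ 2) *ᵥ v) =
      ((ζ * (ζ * v 0 + b * (v 1 / ζ)) + a * ((b : ℂ)⁻¹ * v 0 + ζ * (v 1 / ζ))) *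
        (starRingEnd ℂ) ((a : ℂ)⁻¹ * (ζ * v 0 + b * (v 1 / ζ)) +
          ζ * ((b : ℂ)⁻¹ * v 0 + ζ * (v 1 / ζ)))).re := by
    unfold indefForm
    congr 3
    · simp [aztecA, Matrix.mulVec, dotProduct, Fin.sum_univ_two]
      field_simp
      ring
    · simp [aztecA, Matrix.mulVec, dotProduct, Fin.sum_univ_two]
      field_simp
      ring
  rw [e]
  unfold indefForm
  constructor
  · nlinarith [mul_le_mul_of_nonneg_left h1.1 hN.le]
  · intro hv
    have hw : v 0 ≠ 0 ∨ v 1 / ζ ≠ 0 := by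
      by_contra! h
      apply hv
      funext i
      fin_cases i
      · exact h.1
      · simpa [hζ0] using h.2
    nlinarith [mul_lt_mul_of_pos_left (h1.2 hζ1 hw) hN]

lemma indefForm_prod {ζ : ℂ} (hζ : 0 < ζ.re) (hζ1 : ζ ≠ 1) (L : List (ℝ × ℝ))
    (hL : ∀ p ∈ L, 0 < p.1 ∧ 0 < p.2) (hne : L ≠ []) (v : Fin 2 → ℂ) (hv : v ≠ 0) :
    (‖ζ ^ 2 - 1‖ ^ 2) ^ L.length * indefForm ζ v <
      indefForm ζ ((L.map fun p => aztecA p.1 p.2 (ζ ^ 2)).prod *ᵥ v) := by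
  induction L with
  | nil => exact absurd rfl hne
  | cons p L ih =>
    have hp := hL p (by simp)
    by_cases hL0 : L = []
    · subst hL0
      simpa using (indefForm_aztecA hζ hζ1 hp.1 hp.2 v).2 hv
    · have h := ih (fun r hr => hL r (by simp [hr])) hL0
      have h2 := (indefForm_aztecA hζ hζ1 hp.1 hp.2
        ((L.map fun p => aztecA p.1 p.2 (ζ ^ 2)).prod *ᵥ v)).1
      rw [List.map_cons, List.prod_cons, ← Matrix.mulVec_mulVec, List.length_cons, pow_succ']
      have hN := norm_sq_sub_one_pos hζ hζ1
      nlinarith [mul_lt_mul_of_pos_left h (pow_pos hN 2)]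

lemma det_aztecA {a b : ℝ} (ha : 0 < a) (hb : 0 < b) (z : ℂ) :
    (aztecA a b z).det = (z - 1) ^ 2 := by
  have ha' : (a : ℂ) ≠ 0 := by exact_mod_cast ha.ne'
  have hb' : (b : ℂ) ≠ 0 := by exact_mod_cast hb.ne'
  simp only [aztecA, Matrix.det_fin_two_of]
  field_simp
  ring

lemma det_prod_aztecA (L : List (ℝ × ℝ)) (hL : ∀ p ∈ L, 0 < p.1 ∧ 0 < p.2) (z : ℂ) :
    ((L.map fun p => aztecA p.1 p.2 z).prod).det = ((z - 1) ^ L.length) ^ 2 := by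
  induction L with
  | nil => simp
  | cons p L ih =>
    have hp := hL p (by simp)
    rw [List.map_cons, List.prod_cons, Matrix.det_mul, det_aztecA hp.1 hp.2,
      ih (fun r hr => hL r (by simp [hr])), List.length_cons]
    ring

/-- The zeros of `Tr T ∓ 2 (z - 1)^k` lie in `(-∞, 0] ∪ {1}`. -/
lemma trace_root_location (L : List (ℝ × ℝ)) (hL : ∀ p ∈ L, 0 < p.1 ∧ 0 < p.2) (hne : L ≠ [])
    {ε : ℝ} (hε : ε ^ 2 = 1) (z : ℂ)
    (hz : ((L.map fun p => aztecA p.1 p.2 z).prod).trace = 2 * ε * (z - 1) ^ L.length) :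
    ∃ r : ℝ, (r : ℂ) = z ∧ (r ≤ 0 ∨ r = 1) := by
  obtain ⟨ζ₀, hζ₀⟩ := IsAlgClosed.exists_pow_nat_eq z (n := 2) (by norm_num)
  obtain ⟨ζ, hζ, hre⟩ : ∃ ζ : ℂ, ζ ^ 2 = z ∧ 0 ≤ ζ.re := by
    rcases le_total 0 ζ₀.re with h | h
    · exact ⟨ζ₀, hζ₀, h⟩
    · exact ⟨-ζ₀, by rw [neg_sq, hζ₀], by simpa using h⟩
  rcases hre.eq_or_lt with h0 | hpos
  · refine ⟨-(ζ.im ^ 2), ?_, Or.inl (by nlinarith [sq_nonneg ζ.im])⟩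
    rw [← hζ]
    apply Complex.ext <;> simp [pow_two, ← h0]
  by_cases hζ1 : ζ = 1
  · exact ⟨1, by rw [← hζ, hζ1]; simp, Or.inr rfl⟩
  exfalso
  subst hζ
  have hεC : (ε : ℂ) ^ 2 = 1 := by exact_mod_cast hε
  set T := (L.map fun p => aztecA p.1 p.2 (ζ ^ 2)).prod with hT
  set μ : ℂ := ε * (ζ ^ 2 - 1) ^ L.length with hμ
  have hdet : T.det = μ ^ 2 := by
    rw [hT, det_prod_aztecA L hL, hμ, mul_pow, hεC, one_mul]
  have htr : T.trace = 2 * μ := by rw [hz, hμ]; ring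
  have hsing : (T - μ • (1 : Matrix (Fin 2) (Fin 2) ℂ)).det = 0 := by
    rw [Matrix.det_fin_two] at hdet ⊢
    rw [Matrix.trace_fin_two] at htr
    simp
    linear_combination hdet - μ * htr
  obtain ⟨v, hv, hTv⟩ := Matrix.exists_mulVec_eq_zero_iff.2 hsing
  rw [Matrix.sub_mulVec, Matrix.smul_mulVec, Matrix.one_mulVec, sub_eq_zero] at hTv
  have h := indefForm_prod hpos hζ1 L hL hne v hv
  rw [← hT, hTv] at h
  have hQ : indefForm ζ (μ • v) = Complex.normSq μ * indefForm ζ v := by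
    unfold indefForm
    have : (μ • v) 0 * (starRingEnd ℂ) ((μ • v) 1 / ζ) =
        ((Complex.normSq μ : ℝ) : ℂ) * (v 0 * (starRingEnd ℂ) (v 1 / ζ)) := by
      rw [← Complex.mul_conj]
      simp
      ring
    rw [this, Complex.re_ofReal_mul]
  have hnorm : Complex.normSq μ = (‖ζ ^ 2 - 1‖ ^ 2) ^ L.length := by
    rw [hμ, map_mul, map_pow, Complex.normSq_ofReal, ← pow_two, hε, one_mul,
      Complex.normSq_eq_norm_sq]
  rw [hQ, hnorm] at h
  exact lt_irrefl _ h

/-- The matrix `A` with polynomial entries. -/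
noncomputable def polyA (a b : ℝ) : Matrix (Fin 2) (Fin 2) ℝ[X] :=
  !![X + C (a * b⁻¹), C (a + b); X * C (a⁻¹ + b⁻¹), X + C (b * a⁻¹)]

/-- The product of the matrices `polyA` along a list of parameters. -/
noncomputable def polyT (L : List (ℝ × ℝ)) : Matrix (Fin 2) (Fin 2) ℝ[X] :=
  (L.map fun p => polyA p.1 p.2).prod

lemma polyA_map_aeval (a b : ℝ) (z : ℂ) :
    (aeval z : ℝ[X] →ₐ[ℝ] ℂ).toRingHom.mapMatrix (polyA a b) = aztecA a b z := by
  ext i j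
  fin_cases i <;> fin_cases j <;> simp [polyA, aztecA]

lemma trace_prod_aztecA (L : List (ℝ × ℝ)) (z : ℂ) :
    ((L.map fun p => aztecA p.1 p.2 z).prod).trace = aeval z (polyT L).trace := by
  have : (L.map fun p => aztecA p.1 p.2 z).prod =
      (aeval z : ℝ[X] →ₐ[ℝ] ℂ).toRingHom.mapMatrix (polyT L) := by
    rw [polyT, map_list_prod, List.map_map]
    congr 2
    funext p
    exact (polyA_map_aeval p.1 p.2 z).symm
  rw [this]
  simp [Matrix.trace_fin_two]

lemma polyT_cons (p : ℝ × ℝ) (L : List (ℝ × ℝ)) : polyT (p :: L) = polyA p.1 p.2 * polyT L := by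
  simp [polyT]

lemma polyT_eval_zero (L : List (ℝ × ℝ)) :
    (polyT L 1 0).eval 0 = 0 ∧ (polyT L 0 0).eval 0 = (L.map fun p => p.1 * p.2⁻¹).prod ∧
      (polyT L 1 1).eval 0 = (L.map fun p => p.2 * p.1⁻¹).prod := by
  induction L with
  | nil => simp [polyT]
  | cons p L ih =>
    obtain ⟨h1, h2, h3⟩ := ih
    rw [polyT_cons]
    simp [Matrix.mul_apply, Fin.sum_univ_two, polyA, h1, h2, h3]

lemma polyT_degree (L : List (ℝ × ℝ)) :
    (polyT L 0 0).natDegree ≤ L.length ∧ (polyT L 0 0).coeff L.length = 1 ∧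
    (polyT L 0 1).natDegree ≤ L.length ∧ (polyT L 0 1).coeff L.length = 0 ∧
    (polyT L 1 0).natDegree ≤ L.length ∧
    (polyT L 1 1).natDegree ≤ L.length ∧ (polyT L 1 1).coeff L.length = 1 := by
  induction L with
  | nil => simp [polyT]
  | cons p L ih =>
    obtain ⟨h1, h2, h3, h4, h5, h6, h7⟩ := ih
    have top : ∀ f : ℝ[X], f.natDegree ≤ L.length → f.coeff (L.length + 1) = 0 := fun f hf =>
      coeff_eq_zero_of_natDegree_lt (by omega)
    have t1 := top _ h1
    have t3 := top _ h3
    have t5 := top _ h5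
    have t6 := top _ h6
    rw [polyT_cons]
    simp only [Matrix.mul_apply, Fin.sum_univ_two, polyA, List.length_cons, Matrix.of_apply,
      Matrix.cons_val', Matrix.cons_val_zero, Matrix.cons_val_one, Matrix.cons_val_fin_one,
      add_mul, coeff_add, mul_assoc, coeff_X_mul, coeff_C_mul]
    have hC : ∀ (c : ℝ) (f : ℝ[X]), f.natDegree ≤ L.length → (C c * f).natDegree ≤ L.length + 1 :=
      fun c f hf => (natDegree_C_mul_le c f).trans (by omega)
    have hX : ∀ f : ℝ[X], f.natDegree ≤ L.length → (X * f).natDegree ≤ L.length + 1 := by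
      intro f hf
      refine natDegree_mul_le.trans ?_
      rw [natDegree_X]
      omega
    have hXC : ∀ (c : ℝ) (f : ℝ[X]), f.natDegree ≤ L.length →
        (X * (C c * f)).natDegree ≤ L.length + 1 :=
      fun c f hf => hX _ ((natDegree_C_mul_le c f).trans hf)
    refine ⟨?_, ?_, ?_, ?_, ?_, ?_, ?_⟩
    · exact natDegree_add_le_of_degree_le
        (natDegree_add_le_of_degree_le (hX _ h1) (hC _ _ h1)) (hC _ _ h5)
    · simp [h2, t1, t5]
    · exact natDegree_add_le_of_degree_le
        (natDegree_add_le_of_degree_le (hX _ h3) (hC _ _ h3)) (hC _ _ h6)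
    · simp [h4, t3, t6]
    · exact natDegree_add_le_of_degree_le (hXC _ _ h1)
        (natDegree_add_le_of_degree_le (hX _ h5) (hC _ _ h5))
    · exact natDegree_add_le_of_degree_le (hXC _ _ h3)
        (natDegree_add_le_of_degree_le (hX _ h6) (hC _ _ h6))
    · simp [h4, h7, t6]

/-- The polynomial `Tr T - 2 ε (X - 1)^k`, a factor of the discriminant when `ε = ±1`. -/
noncomputable def discFactor (L : List (ℝ × ℝ)) (ε : ℝ) : ℝ[X] :=
  (polyT L).trace - C (2 * ε) * (X - 1) ^ L.length

lemma discFactor_natDegree_le (L : List (ℝ × ℝ)) (ε : ℝ) :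
    (discFactor L ε).natDegree ≤ L.length := by
  obtain ⟨h1, -, -, -, -, h6, -⟩ := polyT_degree L
  unfold discFactor
  rw [Matrix.trace_fin_two]
  refine (natDegree_sub_le _ _).trans
    (max_le (natDegree_add_le_of_degree_le h1 h6) ((natDegree_C_mul_le _ _).trans ?_))
  rw [← C_1, natDegree_pow, natDegree_X_sub_C, mul_one]

lemma discFactor_one_natDegree_lt (L : List (ℝ × ℝ)) (hne : L ≠ []) :
    (discFactor L 1).natDegree < L.length := by
  refine (discFactor_natDegree_le L 1).lt_of_ne fun h => ?_
  have hc : (discFactor L 1).coeff L.length = 0 := by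
    obtain ⟨-, h2, -, -, -, -, h7⟩ := polyT_degree L
    have hm : ((X - 1 : ℝ[X]) ^ L.length).coeff L.length = 1 := by
      have hmon : ((X - C 1 : ℝ[X]) ^ L.length).Monic := (monic_X_sub_C 1).pow _
      have := hmon.coeff_natDegree
      rwa [natDegree_pow, natDegree_X_sub_C, mul_one, C_1] at this
    unfold discFactor
    rw [Matrix.trace_fin_two, coeff_sub, coeff_add, coeff_C_mul, h2, h7, hm]
    norm_num
  rw [← h, coeff_natDegree, leadingCoeff_eq_zero] at hc
  rw [hc, natDegree_zero] at h
  exact hne (List.length_eq_zero_iff.1 h.symm)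

lemma discFactor_splits (L : List (ℝ × ℝ)) (hL : ∀ p ∈ L, 0 < p.1 ∧ 0 < p.2) (hne : L ≠ [])
    {ε : ℝ} (hε : ε ^ 2 = 1) :
    (discFactor L ε).Splits ∧ ∀ r ∈ (discFactor L ε).roots, r ≤ 0 ∨ r = 1 := by
  have key : ∀ z : ℂ, aeval z (discFactor L ε) = 0 → ∃ r : ℝ, (r : ℂ) = z ∧ (r ≤ 0 ∨ r = 1) := by
    intro z hz
    apply trace_root_location L hL hne hε z
    rw [trace_prod_aztecA]
    simpa [discFactor, sub_eq_zero] using hz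
  constructor
  · apply Splits.of_splits_map (algebraMap ℝ ℂ) (IsAlgClosed.splits _)
    intro z hz
    have hz' := (mem_roots'.1 hz).2
    rw [IsRoot.def, eval_map_algebraMap] at hz'
    obtain ⟨r, hr, -⟩ := key z hz'
    exact ⟨r, hr⟩
  · intro r hr
    have hr' := (mem_roots'.1 hr).2
    obtain ⟨s, hs, h⟩ := key (r : ℂ) (by
      rw [← Complex.coe_algebraMap, aeval_algebraMap_apply, coe_aeval_eq_eval, hr'.eq_zero, map_zero])
    rwa [Complex.ofReal_inj.1 hs] at h

lemma hasDerivAt_multiset_sum {f f' : ℝ → ℝ → ℝ} {x : ℝ} (s : Multiset ℝ)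
    (h : ∀ r ∈ s, HasDerivAt (f r) (f' r x) x) :
    HasDerivAt (fun y => (s.map fun r => f r y).sum) (s.map fun r => f' r x).sum x := by
  induction s using Multiset.induction with
  | empty => simpa using hasDerivAt_const x (0 : ℝ)
  | cons a s ih =>
    simp only [Multiset.map_cons, Multiset.sum_cons]
    exact (h a (by simp)).add (ih fun r hr => h r (by simp [hr]))

lemma logDeriv_sub_hasDerivAt {q : ℝ[X]} (k : ℝ) (hs : q.Splits)
    (hr : ∀ r ∈ q.roots, r ≤ 0 ∨ r = 1) {x : ℝ} (hx0 : 0 < x) (hx : q.eval x ≠ 0) :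
    ∃ D : ℝ, 0 ≤ D ∧ (q.eval 0 = 0 → 0 < D) ∧
      HasDerivAt (fun y => (y - 1) * (q.derivative.eval y / q.eval y) - k) D x := by
  have hq0 : q ≠ 0 := by rintro rfl; simp at hx
  have hne : ∀ r ∈ q.roots, x - r ≠ 0 := by
    intro r hrm h
    rw [sub_eq_zero] at h
    exact hx (h ▸ (mem_roots'.1 hrm).2)
  have hterm : ∀ r ∈ q.roots, 0 ≤ (1 - r) / (x - r) ^ 2 := by
    intro r hrm
    have : 0 ≤ 1 - r := by rcases hr r hrm with h | h <;> linarith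
    positivity
  refine ⟨(q.roots.map fun r => (1 - r) / (x - r) ^ 2).sum, ?_, ?_, ?_⟩
  · exact Multiset.sum_nonneg fun d hd => by
      obtain ⟨r, hrm, rfl⟩ := Multiset.mem_map.1 hd
      exact hterm r hrm
  · intro h0
    obtain ⟨s, hsr⟩ := Multiset.exists_cons_of_mem ((mem_roots hq0).2 h0)
    rw [hsr, Multiset.map_cons, Multiset.sum_cons]
    have : 0 ≤ (s.map fun r => (1 - r) / (x - r) ^ 2).sum :=
      Multiset.sum_nonneg fun d hd => by
        obtain ⟨r, hrm, rfl⟩ := Multiset.mem_map.1 hd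
        exact hterm r (by rw [hsr]; simp [hrm])
    have h1 : 0 < (1 - 0) / (x - 0) ^ 2 := by simp; positivity
    linarith
  · have hd := (hasDerivAt_multiset_sum (f := fun r y => (y - 1) / (y - r))
      (f' := fun r x => (1 - r) / (x - r) ^ 2) (x := x) q.roots (fun r hrm => by
        refine (((hasDerivAt_id x).sub_const 1).div ((hasDerivAt_id x).sub_const r)
          (hne r hrm)).congr_deriv ?_
        simp only [id]
        ring)).sub_const k
    refine hd.congr_of_eventuallyEq ?_
    filter_upwards [q.continuous.continuousAt.eventually_ne hx] with y hy
    rw [hs.eval_derivative_div_eval_of_ne_zero hy, ← Multiset.sum_map_mul_left]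
    simp only [mul_one_div]

lemma mul_logDeriv_sub_hasDerivAt {q : ℝ[X]} {k : ℕ} (hs : q.Splits)
    (hr : ∀ r ∈ q.roots, r ≤ 0 ∨ r = 1) (hk : q.natDegree ≤ k) {x : ℝ}
    (hx : q.eval x ≠ 0) :
    ∃ D : ℝ, D ≤ 0 ∧ (q.natDegree < k → D < 0) ∧
      HasDerivAt (fun y => y * (y - 1) * (q.derivative.eval y / q.eval y) - k * y) D x := by
  have hne : ∀ r ∈ q.roots, x - r ≠ 0 := by
    intro r hrm h
    rw [sub_eq_zero] at h
    exact hx (h ▸ (mem_roots'.1 hrm).2)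
  have hsum : (q.roots.map fun r => 1 - r * (r - 1) / (x - r) ^ 2).sum ≤
      (q.natDegree : ℝ) := by
    have h := Multiset.sum_le_card_nsmul (q.roots.map fun r => 1 - r * (r - 1) / (x - r) ^ 2) 1
      (fun d hd => by
        obtain ⟨r, hrm, rfl⟩ := Multiset.mem_map.1 hd
        have : 0 ≤ r * (r - 1) := by rcases hr r hrm with h | h <;> nlinarith
        have : 0 ≤ r * (r - 1) / (x - r) ^ 2 := by positivity
        linarith)
    rw [Multiset.card_map, nsmul_one] at h
    exact h.trans (by exact_mod_cast q.card_roots')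
  refine ⟨(q.roots.map fun r => 1 - r * (r - 1) / (x - r) ^ 2).sum - k, ?_, ?_, ?_⟩
  · have : (q.natDegree : ℝ) ≤ k := by exact_mod_cast hk
    linarith
  · intro hlt
    have : (q.natDegree : ℝ) < k := by exact_mod_cast hlt
    linarith
  · have hd := (hasDerivAt_multiset_sum (f := fun r y => y * (y - 1) / (y - r))
      (f' := fun r x => 1 - r * (r - 1) / (x - r) ^ 2) (x := x) q.roots (fun r hrm => by
        refine (((hasDerivAt_id x).mul ((hasDerivAt_id x).sub_const 1)).div
          ((hasDerivAt_id x).sub_const r) (hne r hrm)).congr_deriv ?_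
        have := hne r hrm
        simp only [id, Pi.mul_apply]
        field_simp
        ring)).sub ((hasDerivAt_id x).const_mul (k : ℝ))
    refine (hd.congr_deriv (by simp)).congr_of_eventuallyEq ?_
    filter_upwards [q.continuous.continuousAt.eventually_ne hx] with y hy
    rw [hs.eval_derivative_div_eval_of_ne_zero hy, ← Multiset.sum_map_mul_left]
    simp only [mul_one_div, Pi.sub_apply, id]

/-- If `g₁ = H σ` and `g₂ = H / σ` near `x`, then `2 H' = g₁' / σ + g₂' σ`. -/
lemma deriv_of_mul_div {H g₁ g₂ σ : ℝ → ℝ} {x D₁ D₂ : ℝ} (hσ : DifferentiableAt ℝ σ x)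
    (hσx : σ x ≠ 0) (h₁ : HasDerivAt g₁ D₁ x) (h₂ : HasDerivAt g₂ D₂ x)
    (e₁ : ∀ᶠ y in nhds x, g₁ y = H y * σ y) (e₂ : ∀ᶠ y in nhds x, g₂ y * σ y = H y) :
    deriv H x = (D₁ / σ x + D₂ * σ x) / 2 := by
  have hd := ((h₁.div hσ.hasDerivAt hσx).add (h₂.mul hσ.hasDerivAt)).div_const 2
  have hH : HasDerivAt H _ x := hd.congr_of_eventuallyEq (by
    filter_upwards [e₁, e₂, hσ.continuousAt.eventually_ne hσx] with y h1 h2 h3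
    simp only [Pi.add_apply, Pi.div_apply, Pi.mul_apply]
    rw [h1, h2, mul_div_cancel_right₀ _ h3]
    ring)
  rw [hH.deriv]
  have h1 := e₁.self_of_nhds
  have h2 := e₂.self_of_nhds
  rw [h1, ← h2]
  field_simp
  ring

/-- Logarithmic derivative of the identity `q ρ = (y - 1)^k (ρ - ε)^2`. -/
lemma logDeriv_of_mul_eq {q : ℝ[X]} {ρ : ℝ → ℝ} {k : ℕ} {ε y : ℝ} (hy : y ≠ 1)
    (hρ : DifferentiableAt ℝ ρ y) (h0 : ρ y ≠ 0) (hε : ρ y ≠ ε)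
    (h : ∀ᶠ u in nhds y, q.eval u * ρ u = (u - 1) ^ k * (ρ u - ε) ^ 2) :
    (y - 1) * (q.derivative.eval y / q.eval y) - k =
      (y - 1) * deriv ρ y / ρ y * ((ρ y + ε) / (ρ y - ε)) := by
  have hy1 : y - 1 ≠ 0 := sub_ne_zero.2 hy
  have hρε : ρ y - ε ≠ 0 := sub_ne_zero.2 hε
  have hv := h.self_of_nhds
  have hqne : q.eval y ≠ 0 := by
    intro hq
    rw [hq, zero_mul] at hv
    exact (mul_ne_zero (pow_ne_zero _ hy1) (pow_ne_zero _ hρε)) hv.symm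
  have hl : HasDerivAt (fun u => q.eval u * ρ u) _ y := (q.hasDerivAt y).mul hρ.hasDerivAt
  have hr : HasDerivAt (fun u => (u - 1) ^ k * (ρ u - ε) ^ 2) _ y :=
    (((hasDerivAt_id y).sub_const 1).pow k).mul ((hρ.hasDerivAt.sub_const ε).pow 2)
  have hd := hl.unique (hr.congr_of_eventuallyEq h)
  have hpow : (y - 1) * ((k : ℝ) * (y - 1) ^ (k - 1)) = k * (y - 1) ^ k := by
    rcases k with _ | k
    · simp
    · simp [pow_succ]; ring
  simp only [id, Pi.pow_apply, Nat.cast_ofNat, mul_one, pow_one, Nat.add_one_sub_one] at hd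
  have hd' : (y - 1) * (q.derivative.eval y * ρ y + q.eval y * deriv ρ y) =
      k * (q.eval y * ρ y) + 2 * (y - 1) * ((y - 1) ^ k * (ρ y - ε)) * deriv ρ y := by
    rw [hd, hv]
    linear_combination (ρ y - ε) ^ 2 * hpow
  have hm : (q.eval y * ρ y) * (1 / (ρ y - ε)) = (y - 1) ^ k * (ρ y - ε) := by
    rw [hv]; field_simp
  rw [← hm] at hd'
  field_simp at hd' ⊢
  linear_combination hd'

lemma discFactor_eval_zero (L : List (ℝ × ℝ)) (h₁ : (L.map fun p => p.1 * p.2⁻¹).prod = 1)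
    (h₂ : (L.map fun p => p.2 * p.1⁻¹).prod = 1) :
    (discFactor L ((-1) ^ L.length)).eval 0 = 0 := by
  obtain ⟨-, h2, h3⟩ := polyT_eval_zero L
  have h : ((-1 : ℝ) ^ L.length) * (-1) ^ L.length = 1 := by
    rw [← mul_pow]; norm_num
  simp [discFactor, Matrix.trace_fin_two, h2, h3, h₁, h₂]
  linarith

/-- on `S = (0,1) ∪ (1,∞)`, the derivatives of `y ↦ (y−1) ρ′(y)/ρ(y)` and of
`y ↦ y(y−1) ρ′(y)/ρ(y)` are nonzero, where `ρ` is the large eigenvalue of `Φ` on `S`. -/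
theorem stmt18 (k : ℕ) (hk : 1 ≤ k) (α β : Fin k → ℝ)
    (hα : ∀ m, 0 < α m) (hβ : ∀ m, 0 < β m)
    (hprod : ∏ m, α m = ∏ m, β m)
    (ρ : ℝ → ℝ)
    (hsmooth : ContDiffOn ℝ 2 ρ (Set.Ioo 0 1 ∪ Set.Ioi 1))
    (heig : ∀ x ∈ Set.Ioo (0 : ℝ) 1 ∪ Set.Ioi (1 : ℝ),
        ((x : ℂ) - 1) ^ k * ((ρ x : ℝ) : ℂ) ^ 2
          - Matrix.trace (aztecT α β (x : ℂ)) * ((ρ x : ℝ) : ℂ)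
          + ((x : ℂ) - 1) ^ k = 0)
    (habs : ∀ x ∈ Set.Ioo (0 : ℝ) 1 ∪ Set.Ioi (1 : ℝ), 1 < |ρ x|) :
    ∀ x ∈ Set.Ioo (0 : ℝ) 1 ∪ Set.Ioi (1 : ℝ),
      deriv (fun y : ℝ => (y - 1) * deriv ρ y / ρ y) x ≠ 0 ∧
      deriv (fun y : ℝ => y * (y - 1) * deriv ρ y / ρ y) x ≠ 0 := by
  set S : Set ℝ := Set.Ioo (0 : ℝ) 1 ∪ Set.Ioi (1 : ℝ) with hS
  have hopen : IsOpen S := isOpen_Ioo.union isOpen_Ioi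
  set L : List (ℝ × ℝ) := List.ofFn fun m => (α m, β m) with hLdef
  have hlen : L.length = k := by simp [hLdef]
  have hLpos : ∀ p ∈ L, 0 < p.1 ∧ 0 < p.2 := by
    intro p hp
    obtain ⟨m, rfl⟩ := List.mem_ofFn.1 hp
    exact ⟨hα m, hβ m⟩
  have hLne : L ≠ [] := by
    intro h
    rw [h] at hlen
    simp at hlen
    omega
  have hT : ∀ z : ℂ, aztecT α β z = (L.map fun p => aztecA p.1 p.2 z).prod := by
    intro z
    rw [hLdef, List.map_ofFn]
    rfl
  have hS1 : ∀ y ∈ S, 0 < y ∧ y ≠ 1 := by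
    rintro y (⟨h, h'⟩ | h)
    · exact ⟨h, h'.ne⟩
    · exact ⟨zero_lt_one.trans h, ne_of_gt h⟩
  have hρ0 : ∀ y ∈ S, ρ y ≠ 0 := by
    intro y hy h
    have := habs y hy
    rw [h, abs_zero] at this
    linarith
  have hρε : ∀ ε : ℝ, |ε| = 1 → ∀ y ∈ S, ρ y ≠ ε := by
    intro ε hε y hy h
    have := habs y hy
    rw [h, hε] at this
    exact lt_irrefl _ this
  have hdiff : ∀ y ∈ S, DifferentiableAt ℝ ρ y := fun y hy =>
    (hsmooth.contDiffAt (hopen.mem_nhds hy)).differentiableAt (by norm_num)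
  have hquad : ∀ ε : ℝ, |ε| = 1 → ∀ y ∈ S,
      (discFactor L ε).eval y * ρ y = (y - 1) ^ k * (ρ y - ε) ^ 2 := by
    intro ε hε y hy
    have h := heig y hy
    rw [hT, trace_prod_aztecA, ← Complex.coe_algebraMap, aeval_algebraMap_apply,
      coe_aeval_eq_eval, Complex.coe_algebraMap] at h
    have h' : (y - 1) ^ k * ρ y ^ 2 - (polyT L).trace.eval y * ρ y + (y - 1) ^ k = 0 := by
      exact_mod_cast h
    have hε2 : ε ^ 2 = 1 := by rw [← sq_abs, hε, one_pow]
    simp only [discFactor, eval_sub, eval_mul, eval_C, eval_pow, eval_X, eval_one, hlen]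
    linear_combination -h' - (y - 1) ^ k * hε2
  have hlog : ∀ ε : ℝ, |ε| = 1 → ∀ y ∈ S,
      (y - 1) * ((discFactor L ε).derivative.eval y / (discFactor L ε).eval y) - k =
        (y - 1) * deriv ρ y / ρ y * ((ρ y + ε) / (ρ y - ε)) := fun ε hε y hy =>
    logDeriv_of_mul_eq (hS1 y hy).2 (hdiff y hy) (hρ0 y hy) (hρε ε hε y hy)
      (Filter.eventually_of_mem (hopen.mem_nhds hy) (hquad ε hε))
  have hp₁ : (L.map fun p => p.1 * p.2⁻¹).prod = 1 := by
    rw [hLdef, List.map_ofFn, List.prod_ofFn]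
    simp only [Function.comp, Finset.prod_mul_distrib, Finset.prod_inv_distrib, hprod]
    exact mul_inv_cancel₀ (Finset.prod_pos fun m _ => hβ m).ne'
  have hp₂ : (L.map fun p => p.2 * p.1⁻¹).prod = 1 := by
    rw [hLdef, List.map_ofFn, List.prod_ofFn]
    simp only [Function.comp, Finset.prod_mul_distrib, Finset.prod_inv_distrib, hprod]
    exact mul_inv_cancel₀ (Finset.prod_pos fun m _ => hβ m).ne'
  have hzero := discFactor_eval_zero L hp₁ hp₂
  intro x hx
  have hne : ∀ ε : ℝ, |ε| = 1 → (discFactor L ε).eval x ≠ 0 := by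
    intro ε hε h
    have h2 := hquad ε hε x hx
    rw [h, zero_mul] at h2
    exact mul_ne_zero (pow_ne_zero _ (sub_ne_zero.2 (hS1 x hx).2))
      (pow_ne_zero _ (sub_ne_zero.2 (hρε ε hε x hx))) h2.symm
  have a1 : |(1 : ℝ)| = 1 := abs_one
  have a2 : |(-1 : ℝ)| = 1 := by simp
  obtain ⟨s₁, r₁⟩ := discFactor_splits L hLpos hLne (ε := 1) (by norm_num)
  obtain ⟨s₂, r₂⟩ := discFactor_splits L hLpos hLne (ε := -1) (by norm_num)
  have hm : ∀ y ∈ S, ρ y - 1 ≠ 0 := fun y hy => sub_ne_zero.2 (hρε 1 a1 y hy)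
  have hp : ∀ y ∈ S, ρ y + 1 ≠ 0 := fun y hy h => hρε (-1) a2 y hy (by linarith)
  have hσd : DifferentiableAt ℝ (fun y => (ρ y + 1) / (ρ y - 1)) x :=
    ((hdiff x hx).add_const 1).div ((hdiff x hx).sub_const 1) (hm x hx)
  have hσ : 0 < (ρ x + 1) / (ρ x - 1) := by
    rcases lt_abs.1 (habs x hx) with h | h
    · exact div_pos (by linarith) (by linarith)
    · exact div_pos_of_neg_of_neg (by linarith) (by linarith)
  have hSx : ∀ᶠ y in nhds x, y ∈ S := hopen.mem_nhds hx
  constructor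
  · obtain ⟨D₁, n₁, z₁, d₁⟩ := logDeriv_sub_hasDerivAt k s₁ r₁ (hS1 x hx).1 (hne 1 a1)
    obtain ⟨D₂, n₂, z₂, d₂⟩ := logDeriv_sub_hasDerivAt k s₂ r₂ (hS1 x hx).1 (hne (-1) a2)
    rw [deriv_of_mul_div hσd hσ.ne' d₁ d₂
      (hSx.mono fun y hy => hlog 1 a1 y hy)
      (hSx.mono fun y hy => by
        rw [hlog (-1) a2 y hy]
        have h1 := hm y hy
        have h2 := hp y hy
        rw [sub_neg_eq_add, ← sub_eq_add_neg, mul_assoc, div_mul_div_cancel₀ h2,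
          div_self h1, mul_one])]
    apply ne_of_gt
    rcases neg_one_pow_eq_or ℝ L.length with h | h
    · rw [h] at hzero
      have := z₁ hzero
      positivity
    · rw [h] at hzero
      have := z₂ hzero
      positivity
  · have hdeg := discFactor_one_natDegree_lt L hLne
    have hdeg₂ := discFactor_natDegree_le L (-1)
    rw [hlen] at hdeg hdeg₂
    obtain ⟨D₁, -, z₁, d₁⟩ := mul_logDeriv_sub_hasDerivAt s₁ r₁ hdeg.le (hne 1 a1)
    obtain ⟨D₂, n₂, -, d₂⟩ := mul_logDeriv_sub_hasDerivAt s₂ r₂ hdeg₂ (hne (-1) a2)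
    rw [deriv_of_mul_div hσd hσ.ne' d₁ d₂
      (hSx.mono fun y hy => by
        linear_combination y * hlog 1 a1 y hy)
      (hSx.mono fun y hy => by
        have h1 := hm y hy
        have h2 := hp y hy
        have h3 := hlog (-1) a2 y hy
        have h4 : (ρ y + -1) / (ρ y - -1) * ((ρ y + 1) / (ρ y - 1)) = 1 := by
          rw [sub_neg_eq_add, ← sub_eq_add_neg, div_mul_div_cancel₀ h2, div_self h1]
        linear_combination y * ((ρ y + 1) / (ρ y - 1)) * h3 +
          y * (y - 1) * deriv ρ y / ρ y * h4)]
    apply ne_of_lt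
    have h1 : D₁ / ((ρ x + 1) / (ρ x - 1)) < 0 := div_neg_of_neg_of_pos (z₁ hdeg) hσ
    have h2 : D₂ * ((ρ x + 1) / (ρ x - 1)) ≤ 0 := mul_nonpos_of_nonpos_of_nonneg n₂ hσ.le
    linarith
end
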